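/- (Krylov–Safonov C^α estimate) There exist constants α ∈ (0,1) and C > 0 depending only on n, λ, Λ such that: if a_{ij} : B₁ → ℝ are uniformly elliptic measurable coefficients and v ∈ C²(B₁) is bounded, nonnegative, and satisfies Σ_{i,j} a_{ij}(x) ∂_{ij} v(x) = 0 for all x ∈ B₁, then |v(x) − v(y)| ≤ C ‖v‖_{L^∞(B₁)} |x − y|^α for all x, y ∈ B_{1/2}. -/

import Mathlib

open MeasureTheory Metric Set Filter
open scoped ENNReal NNReal Topology

noncomputable section

/-- Euclidean space `ℝⁿ`. -/
abbrev En (n : ℕ) := EuclideanSpace ℝ (Fin n)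

/-- The second partial derivative `∂_{ij} v (x)`. -/
def pd2 {n : ℕ} (v : En n → ℝ) (i j : Fin n) (x : En n) : ℝ :=
  fderiv ℝ (fun y => fderiv ℝ v y (EuclideanSpace.single i 1)) x (EuclideanSpace.single j 1)

/-- Measurable, uniformly elliptic coefficients on `Ω`:
`λ|ξ|² ≤ Σ aᵢⱼ(x) ξᵢ ξⱼ ≤ Λ|ξ|²` for every `x ∈ Ω` and all `ξ`. -/
def UnifEllipticOn {n : ℕ} (Ω : Set (En n)) (lam Lam : ℝ)
    (a : Fin n → Fin n → En n → ℝ) : Prop :=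
  (∀ i j, Measurable (a i j)) ∧
    ∀ x ∈ Ω, ∀ ξ : En n,
      lam * ∑ i, ξ i ^ 2 ≤ ∑ i, ∑ j, a i j x * ξ i * ξ j ∧
      ∑ i, ∑ j, a i j x * ξ i * ξ j ≤ Lam * ∑ i, ξ i ^ 2

/-!
At each point, a solution and its negative are supersolutions for *some* elliptic matrix, and this
is all that is used. Let `u ≥ 0` be a supersolution that is small somewhere near the centre of a
ball. Slide paraboloids of fixed opening from below until they touch `u`. At a contact point the
equation bounds the Hessian of `u` from both sides, hence also the Jacobian of the map sending the
contact point to the vertex of its paraboloid. By the area formula the contact points, where `u` is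
small, fill a fixed fraction of the ball. Contrapositively, a supersolution that is large on most of
a ball is bounded below near its centre, and comparison with a Gaussian barrier carries this bound
to a larger ball. By the growing ink spots lemma, most may be weakened to half. One of `v - a`
and `b - v` is large on half of any ball where `a ≤ v ≤ b`, so the oscillation of `v` decays by a
fixed factor from a ball to the concentric one of a quarter of the radius.
-/

variable {n : ℕ} {lam Lam : ℝ}

section Matrices

open Matrix

variable {ι : Type*} [Fintype ι]

/-- Pointwise uniform ellipticity `λ|ξ|² ≤ ⟨Aξ, ξ⟩ ≤ Λ|ξ|²` of a coefficient matrix, which is not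
assumed symmetric. -/
def IsUniformlyElliptic (lam Lam : ℝ) (A : Matrix ι ι ℝ) : Prop :=
  ∀ ξ : ι → ℝ, lam * (ξ ⬝ᵥ ξ) ≤ ξ ⬝ᵥ A *ᵥ ξ ∧ ξ ⬝ᵥ A *ᵥ ξ ≤ Lam * (ξ ⬝ᵥ ξ)

lemma trace_mul_vecMulVec_self (A : Matrix ι ι ℝ) (w : ι → ℝ) :
    (A * vecMulVec w w).trace = w ⬝ᵥ A *ᵥ w := by
  rw [mul_vecMulVec, trace_vecMulVec, dotProduct_comm]

lemma IsUniformlyElliptic.mul_trace_le_trace_mul {A P : Matrix ι ι ℝ}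
    (hA : IsUniformlyElliptic lam Lam A)
    (hP : P.PosSemidef) : lam * P.trace ≤ (A * P).trace := by
  obtain ⟨m, w, rfl⟩ := posSemidef_iff_eq_sum_vecMulVec.mp hP
  simp only [star_trivial, trace_sum, Finset.mul_sum, trace_mul_vecMulVec_self,
    trace_vecMulVec]
  exact Finset.sum_le_sum fun k _ => (hA (w k)).1

lemma IsUniformlyElliptic.trace_le {A : Matrix ι ι ℝ} (hA : IsUniformlyElliptic lam Lam A) :
    A.trace ≤ Fintype.card ι * Lam := by
  classical
  have hdiag (i : ι) : A i i ≤ Lam := by simpa using (hA (Pi.single i 1)).2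
  calc A.trace ≤ ∑ _i : ι, Lam := Finset.sum_le_sum fun i _ => hdiag i
    _ = Fintype.card ι * Lam := by simp

lemma prod_le_sum_div_card_pow {z : ι → ℝ} (hz : ∀ i, 0 ≤ z i) :
    ∏ i, z i ≤ ((∑ i, z i) / Fintype.card ι) ^ Fintype.card ι := by
  rcases isEmpty_or_nonempty ι with _ | _
  · simp
  have amgm := Real.geom_mean_le_arith_mean Finset.univ (fun _ => 1) z (by simp)
    (by simp [Fintype.card_pos]) fun i _ => hz i
  simp only [Real.rpow_one, one_mul, Finset.sum_const, Finset.card_univ, nsmul_one] at amgm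
  have hprod : 0 ≤ ∏ i, z i := Finset.prod_nonneg fun i _ => hz i
  calc ∏ i, z i = ((∏ i, z i) ^ (Fintype.card ι : ℝ)⁻¹) ^ Fintype.card ι :=
        (Real.rpow_inv_natCast_pow hprod Fintype.card_ne_zero).symm
    _ ≤ _ := by gcongr

lemma det_le_trace_div_card_pow [DecidableEq ι] {P : Matrix ι ι ℝ} (hP : P.PosSemidef) :
    P.det ≤ (P.trace / Fintype.card ι) ^ Fintype.card ι := by
  rw [hP.isHermitian.det_eq_prod_eigenvalues, hP.isHermitian.trace_eq_sum_eigenvalues]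
  exact prod_le_sum_div_card_pow hP.eigenvalues_nonneg

end Matrices

section Hessian

open Matrix

/-- The Hessian matrix `D²u(x)` of second partial derivatives. -/
def hessian (u : En n → ℝ) (x : En n) : Matrix (Fin n) (Fin n) ℝ :=
  .of fun i j => pd2 u i j x

lemma differentiableAt_fderiv_of_contDiffAt {E : Type*} [NormedAddCommGroup E] [NormedSpace ℝ E]
    {u : E → ℝ} {x : E} (hu : ContDiffAt ℝ 2 u x) : DifferentiableAt ℝ (fderiv ℝ u) x :=
  (hu.fderiv_right (m := 1) (by norm_num)).differentiableAt (by norm_num)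

lemma hessian_apply {u : En n → ℝ} {x : En n} (hu : ContDiffAt ℝ 2 u x) (i j : Fin n) :
    hessian u x i j =
      fderiv ℝ (fderiv ℝ u) x (EuclideanSpace.single j 1) (EuclideanSpace.single i 1) := by
  simp [hessian, pd2,
    fderiv_clm_apply (differentiableAt_fderiv_of_contDiffAt hu) (differentiableAt_const _)]

lemma isHermitian_hessian {u : En n → ℝ} {x : En n} (hu : ContDiffAt ℝ 2 u x) :
    (hessian u x).IsHermitian := by
  ext i j
  simpa [hessian_apply hu] using hu.isSymmSndFDerivAt (by simp) _ _

lemma dotProduct_hessian_mulVec {u : En n → ℝ} {x : En n} (hu : ContDiffAt ℝ 2 u x) (ξ : En n) :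
    ξ.ofLp ⬝ᵥ hessian u x *ᵥ ξ.ofLp = fderiv ℝ (fderiv ℝ u) x ξ ξ := by
  have hξ : ξ = ∑ i, ξ i • EuclideanSpace.single i (1 : ℝ) := by
    simpa using ((EuclideanSpace.basisFun (Fin n) ℝ).sum_repr ξ).symm
  conv_rhs => rw [hξ]
  simp only [dotProduct, mulVec, hessian_apply hu, map_sum, map_smul, _root_.sum_apply,
    _root_.smul_apply, smul_eq_mul, Finset.mul_sum]
  exact Finset.sum_congr rfl fun i _ => Finset.sum_congr rfl fun j _ => by ring

lemma hessian_add {u w : En n → ℝ} {x : En n} (hu : ContDiffAt ℝ 2 u x)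
    (hw : ContDiffAt ℝ 2 w x) : hessian (fun y => u y + w y) x = hessian u x + hessian w x := by
  have hsum : fderiv ℝ (fun y => u y + w y) =ᶠ[𝓝 x] fderiv ℝ u + fderiv ℝ w := by
    filter_upwards [hu.eventually (by simp), hw.eventually (by simp)] with y huy hwy
    exact fderiv_fun_add (huy.differentiableAt (by norm_num)) (hwy.differentiableAt (by norm_num))
  ext i j
  rw [Matrix.add_apply, hessian_apply (hu.add hw), hessian_apply hu, hessian_apply hw,
    hsum.fderiv_eq, fderiv_add (differentiableAt_fderiv_of_contDiffAt hu)
      (differentiableAt_fderiv_of_contDiffAt hw)]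
  simp

lemma hessian_const_mul_add_const (u : En n → ℝ) (s k : ℝ) (x : En n) :
    hessian (fun y => s * u y + k) x = s • hessian u x := by
  have hfst : fderiv ℝ (fun y => s * u y + k) = s • fderiv ℝ u := by
    funext y
    rw [fderiv_add_const]
    exact congrFun (fderiv_const_smul_field (𝕜 := ℝ) (f := u) s) y
  ext i j
  simp only [hessian, pd2, hfst, Matrix.of_apply, Matrix.smul_apply, Pi.smul_apply]
  exact DFunLike.congr_fun (congrFun (fderiv_const_smul_field (𝕜 := ℝ)
    (f := fun y => fderiv ℝ u y (EuclideanSpace.single i (1 : ℝ))) s) x) _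

lemma hessian_comp_norm_sub_sq {ψ : ℝ → ℝ} (hψ : ContDiff ℝ 2 ψ) (z x : En n) :
    hessian (fun y => ψ (‖y - z‖ ^ 2)) x =
      (2 * deriv ψ (‖x - z‖ ^ 2)) • (1 : Matrix (Fin n) (Fin n) ℝ) +
        (4 * deriv (deriv ψ) (‖x - z‖ ^ 2)) • vecMulVec (x - z).ofLp (x - z).ofLp := by
  have hsq (y : En n) : HasFDerivAt (fun y => ‖y - z‖ ^ 2) (2 • innerSL ℝ (y - z)) y := by
    simpa using ((hasFDerivAt_id y).sub_const z).norm_sq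
  have hinner (y : En n) (i : Fin n) : inner ℝ y (EuclideanSpace.single i 1) = y i := by
    simp [EuclideanSpace.inner_single_right]
  have hψ' (s : ℝ) : HasDerivAt (deriv ψ) (deriv (deriv ψ) s) s :=
    ((hψ.deriv' (n := 1)).differentiable (by norm_num) s).hasDerivAt
  ext i j
  have hfst : (fun y => fderiv ℝ (fun y => ψ (‖y - z‖ ^ 2)) y (EuclideanSpace.single i 1)) =
      fun y => deriv ψ (‖y - z‖ ^ 2) * (2 * (y i - z i)) := by
    funext y
    refine (DFunLike.congr_fun (((hψ.differentiable (by norm_num) _).hasDerivAt).comp_hasFDerivAt y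
      (hsq y)).fderiv _).trans ?_
    simp [hinner]
  have hcoord : HasFDerivAt (fun y : En n => 2 * (y i - z i))
      ((2 : ℝ) • EuclideanSpace.proj (𝕜 := ℝ) i) x :=
    ((EuclideanSpace.proj (𝕜 := ℝ) i).hasFDerivAt.sub_const _).const_mul 2
  have hsnd := (((hψ' _).comp_hasFDerivAt x (hsq x)).mul hcoord).fderiv
  simp only [hessian, pd2, Matrix.of_apply, hfst]
  refine (DFunLike.congr_fun hsnd _).trans ?_
  rcases eq_or_ne i j with rfl | hij
  · simp [vecMulVec_apply, hinner]
    ring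
  · simp [vecMulVec_apply, hij, hinner]
    ring

lemma deriv_deriv_nonneg_of_isLocalMin {f : ℝ → ℝ} {a : ℝ} (hmin : IsLocalMin f a)
    (hf : ContinuousAt f a) : 0 ≤ deriv (deriv f) a := by
  by_contra! hneg
  have hmax : IsLocalMax f a := isLocalMax_of_deriv_deriv_neg hneg hmin.deriv_eq_zero hf
  have hconst : f =ᶠ[𝓝 a] fun _ => f a := by
    filter_upwards [hmin, hmax] with t hge hle using le_antisymm hle hge
  have hzero : deriv (deriv f) a = 0 := by simp [hconst.deriv.deriv_eq]
  exact hneg.ne hzero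

lemma fderiv_fderiv_nonneg_of_isLocalMin {E : Type*} [NormedAddCommGroup E] [NormedSpace ℝ E]
    {f : E → ℝ} {x : E} (hmin : IsLocalMin f x) (hf : ContDiffAt ℝ 2 f x) (ξ : E) :
    0 ≤ fderiv ℝ (fderiv ℝ f) x ξ ξ := by
  have hline (t : ℝ) : HasDerivAt (fun t : ℝ => x + t • ξ) ξ t := by
    simpa using ((hasDerivAt_id t).smul_const ξ).const_add x
  have hx : x = x + (0 : ℝ) • ξ := by simp
  have htendsto : Tendsto (fun t : ℝ => x + t • ξ) (𝓝 0) (𝓝 x) := by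
    simpa using (hline 0).continuousAt.tendsto
  have hfst : deriv (fun t : ℝ => f (x + t • ξ)) =ᶠ[𝓝 0] fun t => fderiv ℝ f (x + t • ξ) ξ := by
    filter_upwards [htendsto.eventually (hf.eventually (by simp))] with t ht
    exact ((ht.differentiableAt (by norm_num)).hasFDerivAt.comp_hasDerivAt t (hline t)).deriv
  have hsnd : HasDerivAt (fun t : ℝ => fderiv ℝ f (x + t • ξ) ξ)
      (fderiv ℝ (fderiv ℝ f) x ξ ξ) 0 :=
    ((ContinuousLinearMap.apply ℝ ℝ ξ).hasFDerivAt.comp x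
      (differentiableAt_fderiv_of_contDiffAt hf).hasFDerivAt).comp_hasDerivAt_of_eq 0 (hline 0) hx
  rw [← hsnd.deriv, ← hfst.deriv_eq]
  refine deriv_deriv_nonneg_of_isLocalMin ?_
    (hf.continuousAt.comp_of_eq (hline 0).continuousAt hx.symm)
  filter_upwards [htendsto.eventually hmin] with t ht
  simpa using ht

lemma posSemidef_hessian_of_isLocalMin {f : En n → ℝ} {x : En n} (hmin : IsLocalMin f x)
    (hf : ContDiffAt ℝ 2 f x) : (hessian f x).PosSemidef :=
  .of_dotProduct_mulVec_nonneg (isHermitian_hessian hf) fun ξ => by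
    simpa [← dotProduct_hessian_mulVec hf] using
      fderiv_fderiv_nonneg_of_isLocalMin hmin hf (WithLp.toLp 2 ξ)

end Hessian

section Supersolutions

open Matrix

/-- Supersolutions on `s`: at each point `x`, `tr (A D²u(x)) ≤ 0` for some elliptic matrix `A`
that may depend on `u` and on `x`. This is the class `S̄(λ, Λ)` of Caffarelli–Cabré restricted to
`C²` functions; working with it removes the coefficients from all estimates. -/
structure IsSupersolution (lam Lam : ℝ) (s : Set (En n)) (u : En n → ℝ) : Prop where
  contDiffAt : ∀ x ∈ s, ContDiffAt ℝ 2 u x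
  exists_elliptic : ∀ x ∈ s, ∃ A, IsUniformlyElliptic lam Lam A ∧ (A * hessian u x).trace ≤ 0

variable {s : Set (En n)} {u : En n → ℝ} {x z : En n}

lemma IsSupersolution.mono {t : Set (En n)} (hu : IsSupersolution lam Lam s u) (hts : t ⊆ s) :
    IsSupersolution lam Lam t u :=
  ⟨fun x hx => hu.contDiffAt x (hts hx), fun x hx => hu.exists_elliptic x (hts hx)⟩

lemma IsSupersolution.continuousOn (hu : IsSupersolution lam Lam s u) : ContinuousOn u s :=
  fun x hx => (hu.contDiffAt x hx).continuousAt.continuousWithinAt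

lemma IsSupersolution.const_mul_add_const (hu : IsSupersolution lam Lam s u) {c : ℝ} (hc : 0 ≤ c)
    (k : ℝ) : IsSupersolution lam Lam s fun y => c * u y + k where
  contDiffAt x hx := (contDiffAt_const.mul (hu.contDiffAt x hx)).add contDiffAt_const
  exists_elliptic x hx := by
    obtain ⟨A, hA, htrace⟩ := hu.exists_elliptic x hx
    refine ⟨A, hA, ?_⟩
    rw [hessian_const_mul_add_const, Matrix.mul_smul, trace_smul]
    exact smul_nonpos_of_nonneg_of_nonpos hc htrace

lemma posSemidef_hessian_add_of_isLocalMin {ψ : ℝ → ℝ} (hψ : ContDiff ℝ 2 ψ)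
    (hu : ContDiffAt ℝ 2 u x) (hmin : IsLocalMin (fun y => u y + ψ (‖y - z‖ ^ 2)) x) :
    (hessian u x + ((2 * deriv ψ (‖x - z‖ ^ 2)) • (1 : Matrix (Fin n) (Fin n) ℝ) +
      (4 * deriv (deriv ψ) (‖x - z‖ ^ 2)) •
        vecMulVec (x - z).ofLp (x - z).ofLp)).PosSemidef := by
  have hradial : ContDiffAt ℝ 2 (fun y => ψ (‖y - z‖ ^ 2)) x :=
    hψ.contDiffAt.comp x ((contDiffAt_id.sub contDiffAt_const).norm_sq ℝ)
  rw [← hessian_comp_norm_sub_sq hψ, ← hessian_add hu hradial]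
  exact posSemidef_hessian_of_isLocalMin hmin (hu.add hradial)

/-- The ellipticity bounds make `exp (-q |y - z|²)` a strict subsolution where `|y - z|² > nΛ/2qλ`,
so there it cannot touch a supersolution from below. -/
lemma IsSupersolution.norm_sub_sq_le_of_isLocalMin_sub_gaussian (hlam : 0 ≤ lam)
    (hu : IsSupersolution lam Lam s u) (hx : x ∈ s) {a q : ℝ} (ha : 0 < a) (hq : 0 < q)
    (hmin : IsLocalMin (fun y => u y - a * Real.exp (-(q * ‖y - z‖ ^ 2))) x) :
    2 * q * (lam * ‖x - z‖ ^ 2) ≤ n * Lam := by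
  obtain ⟨A, hA, htrace⟩ := hu.exists_elliptic x hx
  set w := (x - z).ofLp
  set ψ : ℝ → ℝ := fun t => -(a * Real.exp (-(q * t))) with hψ
  have hexp (t : ℝ) : HasDerivAt (fun t => Real.exp (-(q * t))) (-q * Real.exp (-(q * t))) t := by
    simpa [mul_comm] using ((hasDerivAt_id t).const_mul q).neg.exp
  have hψ' : deriv ψ = fun t => a * q * Real.exp (-(q * t)) := by
    funext t
    exact ((hexp t).const_mul a).fun_neg.deriv.trans (by ring)
  have hψ'' : deriv (deriv ψ) = fun t => -(a * q ^ 2 * Real.exp (-(q * t))) := by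
    funext t
    rw [hψ', ((hexp t).const_mul (a * q)).deriv]
    ring
  have hpos := posSemidef_hessian_add_of_isLocalMin (ψ := ψ) (z := z) (by fun_prop)
    (hu.contDiffAt x hx) (by simpa only [hψ, ← sub_eq_add_neg] using hmin)
  rw [hψ'', hψ'] at hpos
  have hnonneg := (mul_nonneg hlam hpos.trace_nonneg).trans (hA.mul_trace_le_trace_mul hpos)
  simp only [Matrix.mul_add, Matrix.mul_smul, mul_one, trace_add, trace_smul,
    trace_mul_vecMulVec_self, smul_eq_mul] at hnonneg
  have hcancel : 0 ≤ A.trace - 2 * q * (w ⬝ᵥ A *ᵥ w) := by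
    have hfactor : 0 < 2 * a * q * Real.exp (-(q * ‖x - z‖ ^ 2)) := by positivity
    refine nonneg_of_mul_nonneg_right ?_ hfactor
    linarith
  have hnorm : ‖x - z‖ ^ 2 = w ⬝ᵥ w := by
    rw [EuclideanSpace.real_norm_sq_eq]
    exact Finset.sum_congr rfl fun i _ => sq _
  calc 2 * q * (lam * ‖x - z‖ ^ 2) ≤ 2 * q * (w ⬝ᵥ A *ᵥ w) := by
        rw [hnorm]
        gcongr
        exact (hA w).1
    _ ≤ A.trace := by linarith
    _ ≤ n * Lam := by simpa using hA.trace_le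

lemma IsSupersolution.gaussian_sub_le (hlam : 0 ≤ lam) {a q ρ R : ℝ} (ha : 0 < a) (hq : 0 < q)
    (hqρ : ∀ y, ρ < ‖y - z‖ → n * Lam < 2 * q * (lam * ‖y - z‖ ^ 2))
    (hu : IsSupersolution lam Lam (closedBall z R) u) (hpos : ∀ y ∈ closedBall z R, 0 ≤ u y)
    (hlow : ∀ y ∈ closedBall z ρ, a ≤ u y) (hx : x ∈ closedBall z R) :
    a * (Real.exp (-(q * ‖x - z‖ ^ 2)) - Real.exp (-(q * R ^ 2))) ≤ u x := by
  have hcont : ContinuousOn (fun y => u y - a * Real.exp (-(q * ‖y - z‖ ^ 2))) (closedBall z R) :=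
    hu.continuousOn.sub (by fun_prop)
  obtain ⟨y, hy, hmin⟩ := (isCompact_closedBall z R).exists_isMinOn ⟨x, hx⟩ hcont
  suffices hylow : -(a * Real.exp (-(q * R ^ 2))) ≤ u y - a * Real.exp (-(q * ‖y - z‖ ^ 2)) by
    have := isMinOn_iff.mp hmin x hx
    linarith
  have hR : ‖y - z‖ ≤ R := mem_closedBall_iff_norm.mp hy
  rcases le_or_gt ‖y - z‖ ρ with hyρ | hyρ
  · have hexp : Real.exp (-(q * ‖y - z‖ ^ 2)) ≤ 1 :=
      Real.exp_le_one_iff.mpr (neg_nonpos.mpr (by positivity))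
    have := hlow y (mem_closedBall_iff_norm.mpr hyρ)
    nlinarith [Real.exp_pos (-(q * R ^ 2))]
  rcases hR.eq_or_lt with hyR | hyR
  · rw [hyR]
    linarith [hpos y hy]
  · have hloc := hmin.isLocalMin (closedBall_mem_nhds_of_mem (mem_ball_iff_norm.mpr hyR))
    exact absurd (hu.norm_sub_sq_le_of_isLocalMin_sub_gaussian hlam hy ha hq hloc)
      (hqρ y hyρ).not_ge

lemma exists_pos_le_of_half_le_on_closedBall (n : ℕ) {lam Lam : ℝ} (hlam : 0 < lam)
    (hLam : 0 ≤ Lam) :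
    ∃ c ∈ Ioc (0 : ℝ) 1, ∀ (u : En n → ℝ) (z : En n) (r : ℝ), 0 < r →
      IsSupersolution lam Lam (closedBall z (4 * r)) u → (∀ x ∈ closedBall z (4 * r), 0 ≤ u x) →
      (∀ x ∈ closedBall z (r / 8), 1 / 2 ≤ u x) → ∀ x ∈ closedBall z (3 * r), c ≤ u x := by
  obtain ⟨Q, hQ⟩ : ∃ Q, 32 * (n * Lam / lam) < Q := exists_gt _
  have hQpos : 0 < Q := lt_of_le_of_lt (by positivity) hQ
  have hexp : Real.exp (-(16 * Q)) < Real.exp (-(9 * Q)) := Real.exp_lt_exp.mpr (by linarith)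
  have hexp_le : Real.exp (-(9 * Q)) ≤ 1 := Real.exp_le_one_iff.mpr (by linarith)
  refine ⟨1 / 2 * (Real.exp (-(9 * Q)) - Real.exp (-(16 * Q))), ⟨by linarith, ?_⟩, ?_⟩
  · linarith [Real.exp_pos (-(16 * Q))]
  intro u z r hr hu hpos hlow x hx
  have hsteep (y : En n) (hy : r / 8 < ‖y - z‖) :
      n * Lam < 2 * (Q / r ^ 2) * (lam * ‖y - z‖ ^ 2) := by
    calc n * Lam = lam * (32 * (n * Lam / lam)) / 32 := by field_simp
      _ < lam * Q / 32 := by gcongr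
      _ = 2 * (Q / r ^ 2) * (lam * (r / 8) ^ 2) := by field_simp; norm_num
      _ ≤ 2 * (Q / r ^ 2) * (lam * ‖y - z‖ ^ 2) := by gcongr
  have hbarrier := hu.gaussian_sub_le hlam.le (a := 1 / 2) (by norm_num) (by positivity) hsteep
    hpos hlow (closedBall_subset_closedBall (by linarith) hx)
  have hxr : Q / r ^ 2 * ‖x - z‖ ^ 2 ≤ 9 * Q := by
    calc Q / r ^ 2 * ‖x - z‖ ^ 2 ≤ Q / r ^ 2 * (3 * r) ^ 2 := by
          gcongr
          exact mem_closedBall_iff_norm.mp hx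
      _ = 9 * Q := by field_simp; norm_num
  have hR : Q / r ^ 2 * (4 * r) ^ 2 = 16 * Q := by field_simp; norm_num
  rw [hR] at hbarrier
  refine le_trans ?_ hbarrier
  gcongr

end Supersolutions

section SlidingParaboloids

variable {E : Type*} [NormedAddCommGroup E] [InnerProductSpace ℝ E] [CompleteSpace E]

/-- The vertex of the paraboloid `y ↦ c - b/2 |y - p|²` that has the same gradient as `u` at `x`.
Its restriction to the contact points is the change of variables in the measure estimate. -/
def vertexMap (u : E → ℝ) (b : ℝ) (x : E) : E :=
  x + b⁻¹ • gradient u x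

lemma vertexMap_eq_of_isLocalMin {u : E → ℝ} {x p : E} {b : ℝ} (hb : b ≠ 0)
    (hu : DifferentiableAt ℝ u x) (hmin : IsLocalMin (fun y => u y + b / 2 * ‖y - p‖ ^ 2) x) :
    vertexMap u b x = p := by
  have hparaboloid : HasFDerivAt (fun y => b / 2 * ‖y - p‖ ^ 2) (b • innerSL ℝ (x - p)) x := by
    refine (((hasFDerivAt_id x).sub_const p).norm_sq.const_mul (b / 2)).congr_fderiv ?_
    ext w
    simp
    ring
  have hcritical := hmin.hasFDerivAt_eq_zero (hu.hasFDerivAt.add hparaboloid)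
  have hgrad : gradient u x = -(b • (x - p)) := by
    refine ext_inner_right ℝ fun w => ?_
    rw [inner_gradient_left, inner_neg_left, real_inner_smul_left]
    exact eq_neg_of_add_eq_zero_left (DFunLike.congr_fun hcritical w)
  rw [vertexMap, hgrad, smul_neg, inv_smul_smul₀ hb]
  abel

lemma contDiffAt_vertexMap {u : E → ℝ} {x : E} (hu : ContDiffAt ℝ 2 u x) (b : ℝ) :
    ContDiffAt ℝ 1 (vertexMap u b) x := by
  have hgrad : ContDiffAt ℝ 1 (gradient u) x :=
    (InnerProductSpace.toDual ℝ E).symm.contDiff.contDiffAt.comp x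
      (hu.fderiv_right (m := 1) (by norm_num))
  exact contDiffAt_id.add (hgrad.const_smul b⁻¹)

open Matrix in
lemma det_fderiv_vertexMap {u : En n → ℝ} {x : En n} (hu : ContDiffAt ℝ 2 u x) (b : ℝ) :
    (fderiv ℝ (vertexMap u b) x).det = (1 + b⁻¹ • hessian u x).det := by
  let e := (EuclideanSpace.basisFun (Fin n) ℝ).toBasis
  have hentry (i j : Fin n) : fderiv ℝ (vertexMap u b) x (EuclideanSpace.single j 1) i =
      (1 + b⁻¹ • hessian u x) i j := by
    have hcoord : (fun y => vertexMap u b y i) =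
        fun y => y i + b⁻¹ * fderiv ℝ u y (EuclideanSpace.single i 1) := by
      funext y
      have hgrad : gradient u y i = fderiv ℝ u y (EuclideanSpace.single i 1) := by
        rw [← inner_gradient_left, EuclideanSpace.inner_single_right]
        simp
      simp [vertexMap, hgrad]
    have hleft := (EuclideanSpace.proj (𝕜 := ℝ) i).hasFDerivAt.comp x
      ((contDiffAt_vertexMap hu b).differentiableAt (by norm_num)).hasFDerivAt
    have hright := (EuclideanSpace.proj (𝕜 := ℝ) i).hasFDerivAt.add
      (((differentiableAt_fderiv_of_contDiffAt hu).clm_apply (differentiableAt_const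
        (EuclideanSpace.single i 1))).hasFDerivAt.const_mul b⁻¹)
    have heq := hleft.unique (hright.congr_of_eventuallyEq (.of_eq hcoord))
    refine (DFunLike.congr_fun heq (EuclideanSpace.single j 1)).trans ?_
    simp [hessian, pd2, one_apply]
  have hmatrix : LinearMap.toMatrix e e (fderiv ℝ (vertexMap u b) x) = 1 + b⁻¹ • hessian u x := by
    ext i j
    rw [← hentry]
    simp [e, LinearMap.toMatrix_apply]
  rw [← hmatrix, LinearMap.det_toMatrix]

lemma IsSupersolution.det_fderiv_vertexMap_mem_Icc {s : Set (En n)} {u : En n → ℝ} {x p : En n}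
    {b : ℝ} (hlam : 0 < lam) (hLam : 0 ≤ Lam) (hb : 0 < b) (hu : IsSupersolution lam Lam s u)
    (hx : x ∈ s) (hmin : IsLocalMin (fun y => u y + b / 2 * ‖y - p‖ ^ 2) x) :
    (fderiv ℝ (vertexMap u b) x).det ∈ Icc 0 ((Lam / lam) ^ n) := by
  obtain ⟨A, hA, htrace⟩ := hu.exists_elliptic x hx
  set P := 1 + b⁻¹ • hessian u x
  have hpos : P.PosSemidef := by
    have hderiv : deriv (fun t => b / 2 * t) = fun _ => b / 2 := by
      funext t
      simp
    have hsum := posSemidef_hessian_add_of_isLocalMin (ψ := fun t => b / 2 * t) (z := p)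
      (by fun_prop) (hu.contDiffAt x hx) hmin
    convert hsum.smul (inv_nonneg.mpr hb.le) using 1
    simp [hderiv, P, smul_smul, add_comm, mul_div_cancel₀, hb.ne']
  have htraceP : P.trace / n ≤ Lam / lam := by
    refine div_le_of_le_mul₀ (by positivity) (by positivity) ?_
    rw [div_mul_eq_mul_div, le_div_iff₀ hlam, mul_comm]
    calc lam * P.trace ≤ (A * P).trace := hA.mul_trace_le_trace_mul hpos
      _ = A.trace + b⁻¹ * (A * hessian u x).trace := by
        simp [P, Matrix.mul_add, Matrix.trace_add]
      _ ≤ A.trace := add_le_of_nonpos_right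
        (mul_nonpos_of_nonneg_of_nonpos (inv_nonneg.mpr hb.le) htrace)
      _ ≤ Lam * n := by simpa [mul_comm] using hA.trace_le
  rw [det_fderiv_vertexMap (hu.contDiffAt x hx)]
  refine ⟨hpos.det_nonneg, ?_⟩
  calc P.det ≤ (P.trace / n) ^ n := by simpa using det_le_trace_div_card_pow hpos
    _ ≤ (Lam / lam) ^ n :=
      pow_le_pow_left₀ (div_nonneg hpos.trace_nonneg n.cast_nonneg) htraceP n

end SlidingParaboloids

section MeasureEstimate

lemma addHaar_image_le_mul_of_abs_det_fderiv_le {E : Type*} [NormedAddCommGroup E]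
    [NormedSpace ℝ E] [FiniteDimensional ℝ E] [MeasurableSpace E] [BorelSpace E] (μ : Measure E)
    [μ.IsAddHaarMeasure] {f : E → E} {f' : E → E →L[ℝ] E} {s : Set E} {C : ℝ}
    (hs : MeasurableSet s) (hf' : ∀ x ∈ s, HasFDerivWithinAt f (f' x) s x)
    (hC : ∀ x ∈ s, |(f' x).det| ≤ C) : μ (f '' s) ≤ ENNReal.ofReal C * μ s := by
  calc μ (f '' s) ≤ ∫⁻ x in s, ENNReal.ofReal |(f' x).det| ∂μ :=
        addHaar_image_le_lintegral_abs_det_fderiv μ hs hf'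
    _ ≤ ∫⁻ _ in s, ENNReal.ofReal C ∂μ :=
        setLIntegral_mono measurable_const fun x hx => ENNReal.ofReal_le_ofReal (hC x hx)
    _ = ENNReal.ofReal C * μ s := setLIntegral_const s _

variable {u : En n → ℝ} {z : En n} {r : ℝ}

/-- Paraboloids of opening `16 / r ^ 2` with vertex in `ball z (r / 8)`, raised until they touch
`u`, do so below height `1` and away from the boundary of the ball. -/
lemma IsSupersolution.ball_subset_vertexMap_image (hlam : 0 < lam) (hLam : 0 ≤ Lam) (hr : 0 < r)
    (hu : IsSupersolution lam Lam (closedBall z r) u) (hpos : ∀ x ∈ closedBall z r, 0 ≤ u x)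
    {x₀ : En n} (hx₀ : x₀ ∈ closedBall z (r / 8)) (hux₀ : u x₀ < 1 / 2) :
    ball z (r / 8) ⊆ vertexMap u (16 / r ^ 2) '' {x ∈ ball z r | u x < 1 ∧
      |(fderiv ℝ (vertexMap u (16 / r ^ 2)) x).det| ≤ (Lam / lam) ^ n} := by
  intro p hp
  set b := 16 / r ^ 2 with hb
  have hb0 : 0 < b := by positivity
  have hcont : ContinuousOn (fun x => u x + b / 2 * ‖x - p‖ ^ 2) (closedBall z r) :=
    hu.continuousOn.add (by fun_prop)
  have hx₀r : x₀ ∈ closedBall z r := closedBall_subset_closedBall (by linarith) hx₀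
  obtain ⟨x, hx, hmin⟩ := (isCompact_closedBall z r).exists_isMinOn ⟨x₀, hx₀r⟩ hcont
  have htouch : u x + b / 2 * ‖x - p‖ ^ 2 < 1 := by
    have hx₀p : ‖x₀ - p‖ ≤ r / 4 := by
      rw [← dist_eq_norm]
      linarith [dist_triangle_right x₀ p z, mem_closedBall.mp hx₀, mem_ball.mp hp]
    calc u x + b / 2 * ‖x - p‖ ^ 2 ≤ u x₀ + b / 2 * ‖x₀ - p‖ ^ 2 := isMinOn_iff.mp hmin x₀ hx₀r
      _ ≤ u x₀ + b / 2 * (r / 4) ^ 2 := by gcongr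
      _ = u x₀ + 1 / 2 := by rw [hb]; field_simp; ring
      _ < 1 := by linarith
  have hxz : x ∈ ball z r := by
    rw [mem_ball]
    by_contra! hfar
    have hxp : 7 * r / 8 ≤ ‖x - p‖ := by
      rw [← dist_eq_norm]
      linarith [dist_triangle x p z, mem_ball.mp hp]
    have hhigh : 49 / 8 ≤ b / 2 * ‖x - p‖ ^ 2 := by
      calc 49 / 8 = b / 2 * (7 * r / 8) ^ 2 := by rw [hb]; field_simp; norm_num
        _ ≤ b / 2 * ‖x - p‖ ^ 2 := by gcongr
    linarith [hpos x hx]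
  have hloc := hmin.isLocalMin (closedBall_mem_nhds_of_mem hxz)
  have hdet := hu.det_fderiv_vertexMap_mem_Icc hlam hLam hb0 hx hloc
  refine ⟨x, ⟨hxz, ?_, (abs_of_nonneg hdet.1).trans_le hdet.2⟩, ?_⟩
  · exact (le_add_of_nonneg_right (by positivity)).trans_lt htouch
  · exact vertexMap_eq_of_isLocalMin hb0.ne'
      ((hu.contDiffAt x hx).differentiableAt (by norm_num)) hloc

lemma isOpen_setOf_lt_and_abs_det_fderiv_vertexMap_lt
    (hu : ∀ x ∈ ball z r, ContDiffAt ℝ 2 u x) (b t C : ℝ) :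
    IsOpen {x ∈ ball z r | u x < t ∧ |(fderiv ℝ (vertexMap u b) x).det| < C} := by
  rw [isOpen_iff_mem_nhds]
  rintro x ⟨hx, hut, hdet⟩
  have hcont : ContinuousAt (fun y => |(fderiv ℝ (vertexMap u b) y).det|) x :=
    (ContinuousLinearMap.continuous_det.continuousAt.comp
      ((contDiffAt_vertexMap (hu x hx) b).continuousAt_fderiv (by norm_num))).abs
  filter_upwards [isOpen_ball.mem_nhds hx, (hu x hx).continuousAt.eventually_lt_const hut,
    hcont.eventually_lt_const hdet] with y hyr hyt hyC using ⟨hyr, hyt, hyC⟩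

lemma IsSupersolution.volume_ball_le_mul_volume_lt_one (hlam : 0 < lam) (hLam : 0 ≤ Lam)
    (hr : 0 < r) (hu : IsSupersolution lam Lam (closedBall z r) u)
    (hpos : ∀ x ∈ closedBall z r, 0 ≤ u x) (hlow : ∃ x ∈ closedBall z (r / 8), u x < 1 / 2) :
    volume (ball z (r / 8)) ≤
      ENNReal.ofReal ((Lam / lam) ^ n + 1) * volume {x ∈ closedBall z r | u x < 1} := by
  obtain ⟨x₀, hx₀, hux₀⟩ := hlow
  set b := 16 / r ^ 2
  set S := {x ∈ ball z r | u x < 1 ∧ |(fderiv ℝ (vertexMap u b) x).det| < (Lam / lam) ^ n + 1}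
  have hball (x : En n) (hx : x ∈ ball z r) : ContDiffAt ℝ 2 u x :=
    hu.contDiffAt x (ball_subset_closedBall hx)
  have hS : MeasurableSet S :=
    (isOpen_setOf_lt_and_abs_det_fderiv_vertexMap_lt hball b 1 _).measurableSet
  have hderiv (x : En n) (hx : x ∈ S) :
      HasFDerivWithinAt (vertexMap u b) (fderiv ℝ (vertexMap u b) x) S x :=
    ((contDiffAt_vertexMap (hball x hx.1) b).differentiableAt
      (by norm_num)).hasFDerivAt.hasFDerivWithinAt
  calc volume (ball z (r / 8)) ≤ volume (vertexMap u b '' S) :=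
        measure_mono <| (hu.ball_subset_vertexMap_image hlam hLam hr hpos hx₀ hux₀).trans <|
          image_mono fun x hx => ⟨hx.1, hx.2.1, hx.2.2.trans_lt (lt_add_one _)⟩
    _ ≤ ENNReal.ofReal ((Lam / lam) ^ n + 1) * volume S :=
        addHaar_image_le_mul_of_abs_det_fderiv_le volume hS hderiv fun x hx => hx.2.2.le
    _ ≤ ENNReal.ofReal ((Lam / lam) ^ n + 1) * volume {x ∈ closedBall z r | u x < 1} := by
        gcongr
        exact fun x hx => ⟨ball_subset_closedBall hx.1, hx.2.1⟩

lemma exists_mul_volume_closedBall_le_volume_lt_one (n : ℕ) {lam Lam : ℝ} (hlam : 0 < lam)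
    (hLam : 0 ≤ Lam) :
    ∃ δ ∈ Ioc (0 : ℝ) 1, ∀ (u : En n → ℝ) (z : En n) (r : ℝ), 0 < r →
      IsSupersolution lam Lam (closedBall z r) u → (∀ x ∈ closedBall z r, 0 ≤ u x) →
      (∃ x ∈ closedBall z (r / 8), u x < 1 / 2) →
      δ * volume.real (closedBall z r) ≤ volume.real {x ∈ closedBall z r | u x < 1} := by
  set C := (Lam / lam) ^ n + 1
  have hC : 1 ≤ C := le_add_of_nonneg_left (by positivity)
  refine ⟨(1 / 8) ^ n / C, ⟨by positivity, ?_⟩, ?_⟩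
  · exact div_le_one_of_le₀ ((pow_le_one₀ (by norm_num) (by norm_num)).trans hC) (by linarith)
  intro u z r hr hu hpos hlow
  have hsmall : volume.real (ball z (r / 8)) = (1 / 8) ^ n * volume.real (closedBall z r) := by
    rw [measureReal_def, Measure.addHaar_ball_of_pos _ _ (by positivity), ENNReal.toReal_mul,
      ENNReal.toReal_ofReal (by positivity), ← measureReal_def,
      Measure.addHaar_real_closedBall _ _ hr.le, finrank_euclideanSpace_fin, div_pow, div_pow]
    ring
  have hfin : volume {x ∈ closedBall z r | u x < 1} ≠ ∞ :=
    measure_ne_top_of_subset (sep_subset _ _) measure_closedBall_lt_top.ne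
  rw [div_mul_eq_mul_div, div_le_iff₀' (by positivity), ← hsmall]
  refine (ENNReal.toReal_mono (ENNReal.mul_ne_top ENNReal.ofReal_ne_top hfin)
    (hu.volume_ball_le_mul_volume_lt_one hlam hLam hr hpos hlow)).trans_eq ?_
  rw [ENNReal.toReal_mul, ENNReal.toReal_ofReal (by linarith), measureReal_def]

lemma measurableSet_sep_le {X : Type*} [TopologicalSpace X] [MeasurableSpace X]
    [OpensMeasurableSpace X] {s : Set X} (hs : IsClosed s) {f : X → ℝ} (hf : ContinuousOn f s)
    (t : ℝ) : MeasurableSet {x ∈ s | t ≤ f x} :=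
  (hf.preimage_isClosed_of_isClosed hs isClosed_Ici).measurableSet

lemma exists_le_of_lt_volume_superlevel (n : ℕ) {lam Lam : ℝ} (hlam : 0 < lam) (hLam : 0 ≤ Lam) :
    ∃ δ ∈ Ioc (0 : ℝ) 1, ∃ c ∈ Ioc (0 : ℝ) 1,
      ∀ (u : En n → ℝ) (z : En n) (r t : ℝ), 0 < r → 0 < t →
      IsSupersolution lam Lam (closedBall z (4 * r)) u → (∀ x ∈ closedBall z (4 * r), 0 ≤ u x) →
      (1 - δ) * volume.real (closedBall z r) < volume.real {x ∈ closedBall z r | t ≤ u x} →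
      ∀ x ∈ closedBall z (3 * r), c * t ≤ u x := by
  obtain ⟨δ, hδ, hmeasure⟩ := exists_mul_volume_closedBall_le_volume_lt_one n hlam hLam
  obtain ⟨c, hc, hbarrier⟩ := exists_pos_le_of_half_le_on_closedBall n hlam hLam
  refine ⟨δ, hδ, c, hc, fun u z r t hr ht hu hpos hvol x hx => ?_⟩
  have hsub : closedBall z r ⊆ closedBall z (4 * r) := closedBall_subset_closedBall (by linarith)
  have hw : IsSupersolution lam Lam (closedBall z (4 * r)) fun y => t⁻¹ * u y := by
    simpa using hu.const_mul_add_const (inv_nonneg.mpr ht.le) 0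
  have hwpos (y : En n) (hy : y ∈ closedBall z (4 * r)) : 0 ≤ t⁻¹ * u y :=
    mul_nonneg (inv_nonneg.mpr ht.le) (hpos y hy)
  have hcenter (y : En n) (hy : y ∈ closedBall z (r / 8)) : 1 / 2 ≤ t⁻¹ * u y := by
    by_contra! hlow
    have hsublevel := hmeasure _ z r hr (hw.mono hsub) (fun y hy => hwpos y (hsub hy)) ⟨y, hy, hlow⟩
    have hmeas : MeasurableSet {x ∈ closedBall z r | t ≤ u x} :=
      measurableSet_sep_le isClosed_closedBall (hu.continuousOn.mono hsub) t
    have hcompl : {x ∈ closedBall z r | t⁻¹ * u x < 1} =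
        closedBall z r \ {x ∈ closedBall z r | t ≤ u x} := by
      ext y
      simp +contextual [inv_mul_lt_iff₀ ht]
    rw [hcompl] at hsublevel
    have hsplit := measureReal_inter_add_sdiff (μ := volume) (s := closedBall z r) hmeas
      measure_closedBall_lt_top.ne
    rw [inter_eq_right.mpr (sep_subset _ _)] at hsplit
    linarith
  have hlow := hbarrier _ z r hr hw hwpos hcenter x hx
  rwa [le_inv_mul_iff₀ ht, mul_comm] at hlow

end MeasureEstimate

section InkSpots

open Module

variable {E : Type*} [NormedAddCommGroup E] [NormedSpace ℝ E]

lemma dist_midpoint_add_half_le {x c : E} {ρ : ℝ} (hx : dist x c ≤ ρ) (z : E) :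
    dist (midpoint ℝ x c) z + ρ / 2 ≤ dist c z + ρ := by
  have := dist_triangle (midpoint ℝ x c) c z
  have hmid : dist (midpoint ℝ x c) c = 2⁻¹ * dist x c := by
    simp
  linarith

/-- Halving the ball towards `x` until `P` holds for the first time. -/
lemma exists_closedBall_not_and_midpoint {P : E → ℝ → Prop} {x z : E} {r : ℝ} (hr : 0 < r)
    (hx : x ∈ closedBall z r) (hz : ¬P z r)
    (hP : ∀ (c : ℕ → E) (ρ : ℕ → ℝ), Tendsto ρ atTop (𝓝[>] 0) →
      (∀ k, x ∈ closedBall (c k) (ρ k)) → ∃ k, P (c k) (ρ k)) :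
    ∃ c ρ, 0 < ρ ∧ dist c z + ρ ≤ r ∧ x ∈ closedBall c ρ ∧ ¬P c ρ ∧
      P (midpoint ℝ x c) (ρ / 2) := by
  by_contra! hall
  set c : ℕ → E := fun k => (midpoint ℝ x)^[k] z
  set ρ : ℕ → ℝ := fun k => r / 2 ^ k
  have hρ (k : ℕ) : 0 < ρ k := by positivity
  have hballs (k : ℕ) : dist (c k) z + ρ k ≤ r ∧ x ∈ closedBall (c k) (ρ k) ∧ ¬P (c k) (ρ k) := by
    induction k with
    | zero => simpa [c, ρ] using ⟨hx, hz⟩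
    | succ k ih =>
      obtain ⟨hsub, hmem, hnot⟩ := ih
      have hc : c (k + 1) = midpoint ℝ x (c k) := Function.iterate_succ_apply' _ _ _
      have hhalf : ρ (k + 1) = ρ k / 2 := by
        simp only [ρ, pow_succ, div_div]
      rw [hc, hhalf]
      refine ⟨(dist_midpoint_add_half_le hmem z).trans hsub, ?_, hall _ _ (hρ k) hsub hmem hnot⟩
      have hdist : dist x (midpoint ℝ x (c k)) = 2⁻¹ * dist x (c k) := by
        simp
      rw [mem_closedBall, hdist]
      linarith [mem_closedBall.mp hmem]
  have hlim : Tendsto ρ atTop (𝓝[>] 0) := by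
    refine tendsto_nhdsWithin_iff.mpr ⟨?_, Eventually.of_forall hρ⟩
    exact tendsto_const_nhds.div_atTop (tendsto_pow_atTop_atTop_of_one_lt one_lt_two)
  obtain ⟨k, hk⟩ := hP c ρ hlim fun k => (hballs k).2.1
  exact (hballs k).2.2 hk

variable [FiniteDimensional ℝ E] [MeasurableSpace E] [BorelSpace E] (μ : Measure E)
  [μ.IsAddHaarMeasure]

lemma measure_le_five_pow_mul_tsum_of_forall_mem_closedBall {ι : Type*} {c : ι → E} {r : ι → ℝ}
    {R : ℝ} (hr : ∀ i, r i ∈ Ioc 0 R) {s : Set E} (hs : ∀ x ∈ s, ∃ i, x ∈ closedBall (c i) (r i)) :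
    ∃ v : Set ι, v.Countable ∧ v.PairwiseDisjoint (fun i => closedBall (c i) (r i)) ∧
      μ s ≤ 5 ^ finrank ℝ E * ∑' i : v, μ (closedBall (c i) (r i)) := by
  obtain ⟨v, -, hdisj, hcover⟩ := Vitali.exists_disjoint_subfamily_covering_enlargement_closedBall
    univ c r R (fun i _ => (hr i).2) 5 (by norm_num)
  have hv : v.Countable := hdisj.countable_of_nonempty_interior fun i _ =>
    ⟨c i, ball_subset_interior_closedBall (mem_ball_self (hr i).1)⟩
  refine ⟨v, hv, hdisj, ?_⟩
  have hsub : s ⊆ ⋃ i ∈ v, closedBall (c i) (5 * r i) := fun x hx => by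
    obtain ⟨i, hi⟩ := hs x hx
    obtain ⟨j, hj, hij⟩ := hcover i (mem_univ i)
    exact mem_biUnion hj (hij hi)
  have hscale (i : v) : μ (closedBall (c i) (5 * r i)) =
      5 ^ finrank ℝ E * μ (closedBall (c i) (r i)) := by
    rw [Measure.addHaar_closedBall_mul μ _ (by norm_num) (hr i).1.le,
      Measure.addHaar_closedBall_center μ (c i), ENNReal.ofReal_pow (by norm_num)]
    norm_num
  calc μ s ≤ μ (⋃ i ∈ v, closedBall (c i) (5 * r i)) := measure_mono hsub
    _ ≤ ∑' i : v, μ (closedBall (c i) (5 * r i)) := measure_biUnion_le μ hv _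
    _ = 5 ^ finrank ℝ E * ∑' i : v, μ (closedBall (c i) (r i)) := by
      rw [← ENNReal.tsum_mul_left]
      exact tsum_congr hscale

lemma mul_measure_le_five_pow_mul_measure_sdiff {s t : Set E} (hs : MeasurableSet s) {R : ℝ}
    {κ : ℝ≥0∞} (hball : ∀ᵐ x ∂μ.restrict s, ∃ c, ∃ r ∈ Ioc 0 R, x ∈ closedBall c r ∧
      closedBall c r ⊆ t ∧ κ * μ (closedBall c r) ≤ μ (closedBall c r \ s)) :
    κ * μ s ≤ 5 ^ finrank ℝ E * μ (t \ s) := by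
  set g := {x | ∃ c, ∃ r ∈ Ioc 0 R, x ∈ closedBall c r ∧ closedBall c r ⊆ t ∧
    κ * μ (closedBall c r) ≤ μ (closedBall c r \ s)}
  have hsg : μ s ≤ μ g := measure_mono_ae ((ae_restrict_iff' hs).mp hball)
  choose c r hr hmem hsub hκ using fun x : g => x.2
  obtain ⟨v, hv, hdisj, hcover⟩ := measure_le_five_pow_mul_tsum_of_forall_mem_closedBall μ hr
    (s := g) fun x hx => ⟨⟨x, hx⟩, hmem _⟩
  have hpacking : ∑' i : v, μ (closedBall (c i) (r i) \ s) ≤ μ (t \ s) := by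
    rw [← measure_biUnion hv (f := fun i => closedBall (c i) (r i) \ s)
      (hdisj.mono fun i => sdiff_subset) fun i _ => isClosed_closedBall.measurableSet.diff hs]
    exact measure_mono (iUnion₂_subset fun i _ => sdiff_subset_sdiff_left (hsub i))
  calc κ * μ s ≤ κ * (5 ^ finrank ℝ E * ∑' i : v, μ (closedBall (c i) (r i))) := by
        gcongr
        exact hsg.trans hcover
    _ = 5 ^ finrank ℝ E * ∑' i : v, κ * μ (closedBall (c i) (r i)) := by
        rw [ENNReal.tsum_mul_left, mul_left_comm]
    _ ≤ 5 ^ finrank ℝ E * ∑' i : v, μ (closedBall (c i) (r i) \ s) := by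
        gcongr with i
        exact hκ i
    _ ≤ 5 ^ finrank ℝ E * μ (t \ s) := by gcongr

lemma ae_restrict_exists_lt_measureReal_inter_closedBall (s : Set E) {κ : ℝ} (hκ : κ < 1) :
    ∀ᵐ x ∂μ.restrict s, ∀ (c : ℕ → E) (ρ : ℕ → ℝ), Tendsto ρ atTop (𝓝[>] 0) →
      (∀ k, x ∈ closedBall (c k) (ρ k)) →
      ∃ k, κ * μ.real (closedBall (c k) (ρ k)) < μ.real (s ∩ closedBall (c k) (ρ k)) := by
  filter_upwards [IsUnifLocDoublingMeasure.ae_tendsto_measure_inter_div μ s 1] with x hx c ρ hρ hmem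
  have hdensity := (ENNReal.tendsto_toReal ENNReal.one_ne_top).comp
    (hx c ρ hρ (Eventually.of_forall (by simpa using hmem)))
  obtain ⟨k, hk, hρk⟩ := ((hdensity.eventually_const_lt hκ).and
    (tendsto_nhdsWithin_iff.mp hρ).2).exists
  have hpos : 0 < μ.real (closedBall (c k) (ρ k)) := 
    ENNReal.toReal_pos (measure_closedBall_pos μ _ hρk).ne' measure_closedBall_lt_top.ne
  rw [Function.comp_apply, ENNReal.toReal_div] at hk
  exact ⟨k, (lt_div_iff₀ hpos).mp hk⟩

lemma one_add_mul_measureReal_le_of_ae_mem_closedBall {s t : Set E} {R δ : ℝ} (hδ : 0 ≤ δ)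
    (hs : MeasurableSet s) (hst : s ⊆ t) (ht : μ t ≠ ∞)
    (hball : ∀ᵐ x ∂μ.restrict s, ∃ c, ∃ r ∈ Ioc 0 R, x ∈ closedBall c r ∧
      closedBall c r ⊆ t ∧ μ.real (s ∩ closedBall c r) ≤ (1 - δ) * μ.real (closedBall c r)) :
    (1 + δ / 5 ^ finrank ℝ E) * μ.real s ≤ μ.real t := by
  have hgap : ENNReal.ofReal δ * μ s ≤ 5 ^ finrank ℝ E * μ (t \ s) := by
    refine mul_measure_le_five_pow_mul_measure_sdiff μ hs (R := R) ?_
    filter_upwards [hball] with x ⟨c, r, hr, hxc, hct, hsparse⟩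
    refine ⟨c, r, hr, hxc, hct, ?_⟩
    have hsplit := measureReal_inter_add_sdiff (μ := μ) (s := closedBall c r) hs
      measure_closedBall_lt_top.ne
    rw [inter_comm] at hsplit
    rw [← ofReal_measureReal measure_closedBall_lt_top.ne, ← ENNReal.ofReal_mul hδ]
    refine ENNReal.ofReal_le_of_le_toReal ?_
    rw [← measureReal_def]
    linarith
  have hgapReal : δ * μ.real s ≤ 5 ^ finrank ℝ E * μ.real (t \ s) := by
    have hfin : 5 ^ finrank ℝ E * μ (t \ s) ≠ ∞ :=
      ENNReal.mul_ne_top (by finiteness) (measure_ne_top_of_subset sdiff_subset ht)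
    simpa [measureReal_def, hδ] using ENNReal.toReal_mono hfin hgap
  have hsplit := measureReal_inter_add_sdiff (μ := μ) (s := t) hs ht
  rw [inter_eq_right.mpr hst] at hsplit
  have : δ / 5 ^ finrank ℝ E * μ.real s ≤ μ.real (t \ s) := by
    rwa [div_mul_eq_mul_div, div_le_iff₀' (by positivity)]
  linarith

/-- The growing ink spots lemma of Krylov and Safonov. -/
lemma one_add_mul_measureReal_le_of_closedBall_inter_subset {s t : Set E} {z : E} {r δ : ℝ}
    (hr : 0 < r) (hδ : 0 < δ) (hs : MeasurableSet s) (hst : s ⊆ t) (ht : t ⊆ closedBall z r)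
    (hsmall : μ.real s ≤ (1 - δ) * μ.real (closedBall z r))
    (hspot : ∀ c ρ, 0 < ρ → dist c z + ρ ≤ r →
      (1 - δ) * μ.real (closedBall c ρ) < μ.real (s ∩ closedBall c ρ) →
      closedBall c (3 * ρ) ∩ closedBall z r ⊆ t) :
    (1 + δ / 5 ^ finrank ℝ E) * μ.real s ≤ μ.real t := by
  refine one_add_mul_measureReal_le_of_ae_mem_closedBall μ hδ.le hs hst
    (measure_ne_top_of_subset ht measure_closedBall_lt_top.ne) (R := r) ?_
  filter_upwards [ae_restrict_mem hs,
    ae_restrict_exists_lt_measureReal_inter_closedBall μ s (sub_lt_self 1 hδ)] with x hxs hdense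
  obtain ⟨c, ρ, hρ, hcρ, hxc, hsparse, hmid⟩ := exists_closedBall_not_and_midpoint
    (P := fun c ρ => (1 - δ) * μ.real (closedBall c ρ) < μ.real (s ∩ closedBall c ρ))
    hr (ht (hst hxs)) (by simpa [inter_eq_left.mpr (hst.trans ht)] using hsmall) hdense
  have hfill := hspot _ _ (half_pos hρ) ((dist_midpoint_add_half_le hxc z).trans hcρ) hmid
  have hdist : dist c (midpoint ℝ x c) = 2⁻¹ * dist x c := by
    simp
  refine ⟨c, ρ, ⟨hρ, by linarith [dist_nonneg (x := c) (y := z)]⟩, hxc, ?_, not_lt.mp hsparse⟩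
  refine (subset_inter (closedBall_subset_closedBall' ?_)
    (closedBall_subset_closedBall' ?_)).trans hfill
  · linarith [mem_closedBall.mp hxc]
  · linarith

end InkSpots

section OscillationDecay

lemma exists_le_or_one_add_mul_volume_superlevel_le (n : ℕ) {lam Lam : ℝ} (hlam : 0 < lam)
    (hLam : 0 ≤ Lam) :
    ∃ η > (0 : ℝ), ∃ c ∈ Ioc (0 : ℝ) 1, ∀ (u : En n → ℝ) (z : En n) (r t : ℝ), 0 < r → 0 < t →
      IsSupersolution lam Lam (closedBall z (4 * r)) u → (∀ x ∈ closedBall z (4 * r), 0 ≤ u x) →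
      (∀ x ∈ closedBall z r, c * t ≤ u x) ∨
        (1 + η) * volume.real {x ∈ closedBall z r | t ≤ u x} ≤
          volume.real {x ∈ closedBall z r | c * t ≤ u x} := by
  obtain ⟨δ, hδ, c, hc, hgrowth⟩ := exists_le_of_lt_volume_superlevel n hlam hLam
  refine ⟨δ / 5 ^ n, div_pos hδ.1 (by positivity), c, hc, fun u z r t hr ht hu hpos => ?_⟩
  rcases lt_or_ge ((1 - δ) * volume.real (closedBall z r))
    (volume.real {x ∈ closedBall z r | t ≤ u x}) with hlarge | hsmall
  · exact Or.inl fun x hx =>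
      hgrowth u z r t hr ht hu hpos hlarge x (closedBall_subset_closedBall (by linarith) hx)
  right
  have hmono : {x ∈ closedBall z r | t ≤ u x} ⊆ {x ∈ closedBall z r | c * t ≤ u x} :=
    fun x hx => ⟨hx.1, (mul_le_of_le_one_left ht.le hc.2).trans hx.2⟩
  have hsub : closedBall z r ⊆ closedBall z (4 * r) := closedBall_subset_closedBall (by linarith)
  have hspread (y : En n) (ρ : ℝ) (hρ : 0 < ρ) (hyρ : dist y z + ρ ≤ r)
      (hdense : (1 - δ) * volume.real (closedBall y ρ) <
        volume.real ({x ∈ closedBall z r | t ≤ u x} ∩ closedBall y ρ)) :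
      closedBall y (3 * ρ) ∩ closedBall z r ⊆ {x ∈ closedBall z r | c * t ≤ u x} := fun x hx => by
    have hball : closedBall y (4 * ρ) ⊆ closedBall z (4 * r) :=
      closedBall_subset_closedBall' (by linarith [dist_nonneg (x := y) (y := z)])
    have hdense' : (1 - δ) * volume.real (closedBall y ρ) <
        volume.real {x ∈ closedBall y ρ | t ≤ u x} :=
      hdense.trans_le (measureReal_mono (fun w hw => ⟨hw.2, hw.1.2⟩)
        (measure_ne_top_of_subset (sep_subset _ _) measure_closedBall_lt_top.ne))
    exact ⟨hx.2, hgrowth u y ρ t hρ ht (hu.mono hball) (fun w hw => hpos w (hball hw)) hdense'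
      x hx.1⟩
  simpa using one_add_mul_measureReal_le_of_closedBall_inter_subset volume hr hδ.1
    (measurableSet_sep_le isClosed_closedBall (hu.continuousOn.mono hsub) t)
    hmono (sep_subset _ _) hsmall hspread

lemma exists_mul_le_of_mul_volume_le_superlevel (n : ℕ) {lam Lam κ : ℝ} (hlam : 0 < lam)
    (hLam : 0 ≤ Lam) (hκ : 0 < κ) :
    ∃ θ ∈ Ioc (0 : ℝ) 1, ∀ (u : En n → ℝ) (z : En n) (r t : ℝ), 0 < r → 0 < t →
      IsSupersolution lam Lam (closedBall z (4 * r)) u → (∀ x ∈ closedBall z (4 * r), 0 ≤ u x) →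
      κ * volume.real (closedBall z r) ≤ volume.real {x ∈ closedBall z r | t ≤ u x} →
      ∀ x ∈ closedBall z r, θ * t ≤ u x := by
  obtain ⟨η, hη, c, hc, hstep⟩ := exists_le_or_one_add_mul_volume_superlevel_le n hlam hLam
  obtain ⟨N, hN⟩ := pow_unbounded_of_one_lt κ⁻¹ (lt_add_of_pos_right 1 hη)
  refine ⟨c ^ N, ⟨pow_pos hc.1 N, pow_le_one₀ hc.1.le hc.2⟩, ?_⟩
  intro u z r t hr ht hu hpos hdense
  have hiter (k : ℕ) : (∀ x ∈ closedBall z r, c ^ k * t ≤ u x) ∨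
      (1 + η) ^ k * volume.real {x ∈ closedBall z r | t ≤ u x} ≤
        volume.real {x ∈ closedBall z r | c ^ k * t ≤ u x} := by
    induction k with
    | zero => simp
    | succ k ih =>
      have hkt : 0 < c ^ k * t := mul_pos (pow_pos hc.1 k) ht
      simp only [pow_succ', mul_assoc]
      rcases ih with hlow | hspread
      · exact Or.inl fun x hx => (mul_le_of_le_one_left hkt.le hc.2).trans (hlow x hx)
      · refine (hstep u z r (c ^ k * t) hr hkt hu hpos).imp_right fun hgrow => ?_
        exact (mul_le_mul_of_nonneg_left hspread (by positivity)).trans hgrow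
  refine (hiter N).resolve_right fun hspread => ?_
  have hball : 0 < volume.real (closedBall z r) :=
    ENNReal.toReal_pos (measure_closedBall_pos _ _ hr).ne' measure_closedBall_lt_top.ne
  have hover : volume.real (closedBall z r) < volume.real (closedBall z r) := by
    calc volume.real (closedBall z r) < (1 + η) ^ N * κ * volume.real (closedBall z r) :=
          lt_mul_of_one_lt_left hball ((inv_lt_iff_one_lt_mul₀ hκ).mp hN)
      _ = (1 + η) ^ N * (κ * volume.real (closedBall z r)) := mul_assoc _ _ _
      _ ≤ (1 + η) ^ N * volume.real {x ∈ closedBall z r | t ≤ u x} := by gcongr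
      _ ≤ volume.real {x ∈ closedBall z r | c ^ N * t ≤ u x} := hspread
      _ ≤ volume.real (closedBall z r) :=
          measureReal_mono (sep_subset _ _) measure_closedBall_lt_top.ne
  exact lt_irrefl _ hover

lemma exists_oscillation_decay (n : ℕ) {lam Lam : ℝ} (hlam : 0 < lam) (hLam : 0 ≤ Lam) :
    ∃ γ ∈ Ico (1 / 2 : ℝ) 1, ∀ (v : En n → ℝ) (z : En n) (r a b : ℝ), 0 < r →
      IsSupersolution lam Lam (closedBall z (4 * r)) v →
      IsSupersolution lam Lam (closedBall z (4 * r)) (-v) →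
      MapsTo v (closedBall z (4 * r)) (Icc a b) →
      ∃ a' b', b' - a' = γ * (b - a) ∧ MapsTo v (closedBall z r) (Icc a' b') := by
  obtain ⟨θ, hθ, hdensity⟩ :=
    exists_mul_le_of_mul_volume_le_superlevel n hlam hLam (κ := 1 / 2) (by norm_num)
  refine ⟨1 - θ / 2, ⟨by linarith [hθ.2], by linarith [hθ.1]⟩, ?_⟩
  intro v z r a b hr hv hnegv hab
  have hsub : closedBall z r ⊆ closedBall z (4 * r) := closedBall_subset_closedBall (by linarith)
  have hz := hab (hsub (mem_closedBall_self hr.le))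
  rcases (hz.1.trans hz.2).eq_or_lt with heq | hlt
  · exact ⟨a, b, by simp [heq], hab.mono_left hsub⟩
  have hD : 0 < (b - a) / 2 := by linarith
  have hcover : closedBall z r ⊆ {x ∈ closedBall z r | (b - a) / 2 ≤ v x + -a} ∪
      {x ∈ closedBall z r | (b - a) / 2 ≤ -v x + b} := fun x hx =>
    (le_total ((b - a) / 2) (v x + -a)).imp (fun h => ⟨hx, h⟩) fun h => ⟨hx, by linarith⟩
  have hvolume := (measureReal_mono (μ := volume) hcover (measure_ne_top_of_subset
    (union_subset (sep_subset _ _) (sep_subset _ _)) measure_closedBall_lt_top.ne)).trans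
      (measureReal_union_le _ _)
  rcases le_total (volume.real {x ∈ closedBall z r | (b - a) / 2 ≤ -v x + b})
    (volume.real {x ∈ closedBall z r | (b - a) / 2 ≤ v x + -a}) with hle | hle
  · have hlow := hdensity _ z r _ hr hD (by simpa using hv.const_mul_add_const zero_le_one (-a))
      (fun x hx => by linarith [(hab hx).1]) (by linarith)
    exact ⟨a + θ * ((b - a) / 2), b, by ring, fun x hx =>
      ⟨by linarith [hlow x hx], (hab (hsub hx)).2⟩⟩
  · have hhigh := hdensity _ z r _ hr hD (by simpa using hnegv.const_mul_add_const zero_le_one b)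
      (fun x hx => by linarith [(hab hx).2]) (by linarith)
    exact ⟨a, b - θ * ((b - a) / 2), by ring, fun x hx =>
      ⟨(hab (hsub hx)).1, by linarith [hhigh x hx]⟩⟩

end OscillationDecay

section Holder

lemma exists_mapsTo_Icc_of_oscillation_decay {X : Type*} [PseudoMetricSpace X] {f : X → ℝ} {x : X}
    {ρ a b τ γ : ℝ} (hτ : τ ∈ Ioo 0 1) (hρ : 0 < ρ) (hf : MapsTo f (closedBall x ρ) (Icc a b))
    (hdecay : ∀ r a b, 0 < r → r ≤ ρ → MapsTo f (closedBall x r) (Icc a b) →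
      ∃ a' b', b' - a' = γ * (b - a) ∧ MapsTo f (closedBall x (τ * r)) (Icc a' b')) (k : ℕ) :
    ∃ a' b', b' - a' = γ ^ k * (b - a) ∧ MapsTo f (closedBall x (τ ^ k * ρ)) (Icc a' b') := by
  induction k with
  | zero => exact ⟨a, b, by simp, by simpa using hf⟩
  | succ k ih =>
    obtain ⟨a', b', hosc, hmaps⟩ := ih
    simp only [pow_succ', mul_assoc, ← hosc]
    exact hdecay _ a' b' (mul_pos (pow_pos hτ.1 k) hρ)
      (mul_le_of_le_one_left hρ.le (pow_le_one₀ hτ.1.le hτ.2.le)) hmaps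

lemma abs_sub_le_rpow_of_oscillation_decay {X : Type*} [MetricSpace X] {f : X → ℝ} {s : Set X}
    {x y : X} {ρ a b τ γ : ℝ} (hτ : τ ∈ Ioo 0 1) (hγ : γ ∈ Ioo 0 1) (hρ : 0 < ρ)
    (hs : closedBall x ρ ⊆ s) (hf : MapsTo f s (Icc a b)) (hy : y ∈ s)
    (hdecay : ∀ r a b, 0 < r → r ≤ ρ → MapsTo f (closedBall x r) (Icc a b) →
      ∃ a' b', b' - a' = γ * (b - a) ∧ MapsTo f (closedBall x (τ * r)) (Icc a' b')) :
    |f y - f x| ≤ γ⁻¹ * (b - a) * (dist y x / ρ) ^ Real.logb τ γ := by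
  have hα : 0 < Real.logb τ γ := Real.logb_pos_of_base_lt_one hτ.1 hτ.2 hγ.1 hγ.2
  have hx : f x ∈ Icc a b := hf (hs (mem_closedBall_self hρ.le))
  have hab : 0 ≤ b - a := sub_nonneg.mpr (hx.1.trans hx.2)
  rcases eq_or_ne y x with rfl | hyx
  · simp [Real.zero_rpow hα.ne']
  rw [mul_right_comm]
  rcases le_or_gt (dist y x / ρ) 1 with hnear | hfar
  · obtain ⟨k, hk, hyk⟩ :=
      exists_nat_pow_near_of_lt_one (div_pos (dist_pos.mpr hyx) hρ) hnear hτ.1 hτ.2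
    obtain ⟨a', b', hosc, hmaps⟩ :=
      exists_mapsTo_Icc_of_oscillation_decay hτ hρ (hf.mono_left hs) hdecay k
    have hscale : γ ^ k ≤ γ⁻¹ * (dist y x / ρ) ^ Real.logb τ γ := by
      rw [← div_eq_inv_mul, le_div_iff₀ hγ.1, ← pow_succ]
      calc γ ^ (k + 1) = (τ ^ (k + 1)) ^ Real.logb τ γ := by
            rw [← Real.rpow_pow_comm hτ.1.le, Real.rpow_logb hτ.1 hτ.2.ne hγ.1]
        _ ≤ (dist y x / ρ) ^ Real.logb τ γ :=
            Real.rpow_le_rpow (pow_nonneg hτ.1.le _) hk.le hα.le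
    calc |f y - f x| ≤ b' - a' :=
          Real.dist_le_of_mem_Icc (hmaps ((div_le_iff₀ hρ).mp hyk))
            (hmaps (mem_closedBall_self (mul_nonneg (pow_nonneg hτ.1.le k) hρ.le)))
      _ = γ ^ k * (b - a) := hosc
      _ ≤ γ⁻¹ * (dist y x / ρ) ^ Real.logb τ γ * (b - a) := by gcongr
  · calc |f y - f x| ≤ b - a := Real.dist_le_of_mem_Icc (hf hy) hx
      _ ≤ γ⁻¹ * (dist y x / ρ) ^ Real.logb τ γ * (b - a) :=
        le_mul_of_one_le_left hab (one_le_mul_of_one_le_of_one_le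
          ((one_le_inv₀ hγ.1).mpr hγ.2.le) (Real.one_le_rpow hfar.le hα.le))

lemma exists_abs_sub_le_rpow_of_isSupersolution (n : ℕ) {lam Lam : ℝ} (hlam : 0 < lam)
    (hLam : 0 ≤ Lam) :
    ∃ α ∈ Ioo (0 : ℝ) 1, ∃ C > 0, ∀ (v : En n → ℝ) (s : Set (En n)) (x y : En n) (ρ a b : ℝ),
      IsSupersolution lam Lam s v → IsSupersolution lam Lam s (-v) → MapsTo v s (Icc a b) →
      0 < ρ → closedBall x ρ ⊆ s → y ∈ s → |v y - v x| ≤ C * (b - a) * (dist y x / ρ) ^ α := by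
  obtain ⟨γ, ⟨hγ, hγ1⟩, hdecay⟩ := exists_oscillation_decay n hlam hLam
  have hγ0 : 0 < γ := by linarith
  refine ⟨Real.logb (1 / 4) γ, ⟨?_, ?_⟩, γ⁻¹, by positivity, ?_⟩
  · exact Real.logb_pos_of_base_lt_one (by norm_num) (by norm_num) hγ0 hγ1
  · rw [Real.logb_lt_iff_lt_rpow_of_base_lt_one (by norm_num) (by norm_num) hγ0, Real.rpow_one]
    linarith
  intro v s x y ρ a b hv hnegv hmaps hρ hs hy
  refine abs_sub_le_rpow_of_oscillation_decay (by norm_num) ⟨hγ0, hγ1⟩ hρ hs hmaps hy ?_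
  intro r a b hr hrρ hab
  have hsub := (closedBall_subset_closedBall hrρ).trans hs
  refine hdecay v x (1 / 4 * r) a b (by positivity) ?_ ?_ ?_ <;>
    rw [show 4 * (1 / 4 * r) = r by ring]
  exacts [hv.mono hsub, hnegv.mono hsub, hab]

end Holder

section Equation

variable {s : Set (En n)} {a : Fin n → Fin n → En n → ℝ} {v : En n → ℝ}

lemma UnifEllipticOn.isUniformlyElliptic (ha : UnifEllipticOn s lam Lam a) {x : En n}
    (hx : x ∈ s) : IsUniformlyElliptic lam Lam (.of fun i j => a i j x) := fun ξ => by
  simpa [dotProduct, Matrix.mulVec, Finset.mul_sum, sq, mul_left_comm, mul_assoc] using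
    ha.2 x hx (WithLp.toLp 2 ξ)

lemma trace_mul_hessian {x : En n} (hv : ContDiffAt ℝ 2 v x) (A : Matrix (Fin n) (Fin n) ℝ) :
    (A * hessian v x).trace = ∑ i, ∑ j, A i j * pd2 v i j x := by
  simp only [Matrix.trace, Matrix.diag_apply, Matrix.mul_apply]
  exact Finset.sum_congr rfl fun i _ => Finset.sum_congr rfl fun j _ =>
    congrArg (A i j * ·) ((isHermitian_hessian hv).apply i j)

lemma UnifEllipticOn.isSupersolution (ha : UnifEllipticOn s lam Lam a)
    (hv : ∀ x ∈ s, ContDiffAt ℝ 2 v x)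
    (hle : ∀ x ∈ s, ∑ i, ∑ j, a i j x * pd2 v i j x ≤ 0) : IsSupersolution lam Lam s v :=
  ⟨hv, fun x hx => ⟨_, ha.isUniformlyElliptic hx,
    (trace_mul_hessian (hv x hx) _).trans_le (hle x hx)⟩⟩

lemma pd2_neg (i j : Fin n) (x : En n) : pd2 (-v) i j x = -pd2 v i j x := by
  simpa [hessian, Pi.neg_def] using congrFun₂ (hessian_const_mul_add_const v (-1) 0 x) i j

lemma UnifEllipticOn.isSupersolution_and_neg (ha : UnifEllipticOn s lam Lam a) (hs : IsOpen s)
    (hv : ContDiffOn ℝ 2 v s) (heq : ∀ x ∈ s, ∑ i, ∑ j, a i j x * pd2 v i j x = 0) :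
    IsSupersolution lam Lam s v ∧ IsSupersolution lam Lam s (-v) := by
  have hv2 (x) (hx : x ∈ s) : ContDiffAt ℝ 2 v x := hv.contDiffAt (hs.mem_nhds hx)
  exact ⟨ha.isSupersolution hv2 fun x hx => (heq x hx).le,
    ha.isSupersolution (fun x hx => (hv2 x hx).neg) fun x hx => by simp [pd2_neg, heq x hx]⟩

end Equation

theorem krylov_safonov_Calpha_general (n : ℕ) {lam Lam : ℝ} (hlam : 0 < lam) (hLam : 0 ≤ Lam) :
    ∃ α C : ℝ, α ∈ Ioo (0 : ℝ) 1 ∧ 0 < C ∧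
      ∀ (v : En n → ℝ) (K : ℝ),
        IsSupersolution lam Lam (ball 0 1) v → IsSupersolution lam Lam (ball 0 1) (-v) →
        (∀ x ∈ ball (0 : En n) 1, |v x| ≤ K) →
        ∀ x ∈ ball (0 : En n) (1 / 2), ∀ y ∈ ball (0 : En n) (1 / 2),
          |v x - v y| ≤ C * K * ‖x - y‖ ^ α := by
  obtain ⟨α, hα, C, hC, hholder⟩ := exists_abs_sub_le_rpow_of_isSupersolution n hlam hLam
  refine ⟨α, C * 2 * 2 ^ α, hα, by positivity, fun v K hv hnegv hK x hx y hy => ?_⟩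
  have hsub : closedBall y (1 / 2) ⊆ ball 0 1 :=
    closedBall_subset_ball' (by linarith [mem_ball.mp hy])
  have hbound := hholder v (ball 0 1) y x (1 / 2) (-K) K hv hnegv (fun w hw => abs_le.mp (hK w hw))
    (by norm_num) hsub (ball_subset_ball (by norm_num) hx)
  calc |v x - v y| ≤ C * (K - -K) * (dist x y / (1 / 2)) ^ α := hbound
    _ = C * (K - -K) * (2 * ‖x - y‖) ^ α := by
      rw [div_div_eq_mul_div, div_one, mul_comm 2, dist_eq_norm]
    _ = C * 2 * 2 ^ α * K * ‖x - y‖ ^ α := by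
      rw [Real.mul_rpow zero_le_two (norm_nonneg _)]
      ring

/-- **Krylov–Safonov `C^α` estimate.** There are `α ∈ (0,1)` and `C > 0` depending only on
`n, λ, Λ` such that any bounded nonnegative `C²` solution of `Σ a_{ij} ∂_{ij} v = 0` in `B₁`
satisfies `|v(x) − v(y)| ≤ C ‖v‖_{L^∞(B₁)} |x − y|^α` for all `x, y ∈ B_{1/2}`. -/
theorem krylov_safonov_Calpha
    (n : ℕ) (hn : 2 ≤ n) (lam Lam : ℝ) (hlam : 0 < lam) (hLam : lam ≤ Lam) :
    ∃ α C : ℝ, α ∈ Set.Ioo (0 : ℝ) 1 ∧ 0 < C ∧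
      ∀ (a : Fin n → Fin n → En n → ℝ) (v : En n → ℝ) (K : ℝ),
        UnifEllipticOn (ball (0 : En n) 1) lam Lam a →
        ContDiffOn ℝ 2 v (ball (0 : En n) 1) →
        (∀ x ∈ ball (0 : En n) 1, 0 ≤ v x) →
        (∀ x ∈ ball (0 : En n) 1, ∑ i, ∑ j, a i j x * pd2 v i j x = 0) →
        (∀ x ∈ ball (0 : En n) 1, |v x| ≤ K) →
        ∀ x ∈ ball (0 : En n) (1 / 2), ∀ y ∈ ball (0 : En n) (1 / 2),
          |v x - v y| ≤ C * K * ‖x - y‖ ^ α := by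
  obtain ⟨α, C, hα, hC, hholder⟩ := krylov_safonov_Calpha_general n hlam (hlam.le.trans hLam)
  exact ⟨α, C, hα, hC, fun a v K ha hv _ heq hK =>
    have hsuper := ha.isSupersolution_and_neg isOpen_ball hv heq
    hholder v K hsuper.1 hsuper.2 hK⟩
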